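/- arXiv:1205.6897 — 2 statements merged into one kernel-verified Lean document; each statement's English description precedes it below -/
import Mathlib

section
/- Let λ=(λ_1,...,λ_l) be a partition of length l, let λ'=(λ'_1,...,λ'_{l'}) be its conjugate partition of length l' = λ_1, and let λ̃' = (λ'_1−1, λ'_2−1, ..., λ'_{l'}−1). Then, as polynomials in x, x_1, ..., x_{l'}: s_λ([x] − Σ_{i=1}^{l'}[x_i]) = (−1)^{N_{λ,1}} · s_{λ̃'}(Σ_{i=1}^{l'}[x_i]) · Π_{j=1}^{l'}(x − x_j), where N_{λ,1} = λ_2+⋯+λ_l. -/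
open MvPolynomial

/-- The polynomial `p_n(t)` defined by `exp(Σ_{n≥1} t_n k^n) = Σ_{n≥0} p_n(t) k^n`,
as a polynomial in the variables `t_1, t_2, ...` (variable `X n` stands for `t_n`). -/
noncomputable def pS (n : ℕ) : MvPolynomial ℕ ℚ :=
  ∑ m ∈ Finset.range (n + 1), (Nat.factorial m : ℚ)⁻¹ •
    ∑ c ∈ Finset.univ.filter
        (fun c : Fin m → Fin (n + 1) =>
          (∑ j, ((c j : ℕ))) = n ∧ ∀ j, 1 ≤ (c j : ℕ)),
      ∏ j, X ((c j : ℕ))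

/-- `p_n` for `n : ℤ`, with `p_n = 0` for `n < 0`. -/
noncomputable def pz (n : ℤ) : MvPolynomial ℕ ℚ :=
  if 0 ≤ n then pS n.toNat else 0

/-- The Schur function `s_λ(t) = det(p_{λ_i - i + j})_{1 ≤ i,j ≤ l}` (here `0`-indexed). -/
noncomputable def schur {l : ℕ} (lam : Fin l → ℕ) : MvPolynomial ℕ ℚ :=
  Matrix.det (Matrix.of fun a b : Fin l =>
    pz ((lam a : ℤ) - ((a : ℕ) : ℤ) + ((b : ℕ) : ℤ)))

/-- Substitution `t_n ↦ (x_1^n + ⋯ + x_k^n)/n`, i.e. `t = [x_1] + ⋯ + [x_k]`. -/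
noncomputable def toPowerSums (k : ℕ) (f : MvPolynomial ℕ ℚ) : MvPolynomial (Fin k) ℚ :=
  aeval (fun n : ℕ => (n : ℚ)⁻¹ • ∑ i : Fin k, X i ^ n) f

/-- Iterated partial derivative `∂_{i_1} ⋯ ∂_{i_r}` for a list `L = [i_1, ..., i_r]`. -/
noncomputable def derivs (L : List ℕ) (f : MvPolynomial ℕ ℚ) : MvPolynomial ℕ ℚ :=
  L.foldr (fun i g => pderiv i g) f

/-- The entries of a partition `λ` padded by zeros (`0`-indexed). -/
def pad {l : ℕ} (lam : Fin l → ℕ) (a : ℕ) : ℕ := if h : a < l then lam ⟨a, h⟩ else 0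

/-- The coefficient of a power series at an integer exponent, zero at negative exponents. -/
noncomputable def intCoeff {R : Type*} [CommRing R] (F : PowerSeries R) (n : ℤ) : R :=
  if 0 ≤ n then PowerSeries.coeff n.toNat F else 0

theorem intCoeff_natCast {R : Type*} [CommRing R] (F : PowerSeries R) (n : ℕ) :
    intCoeff F n = PowerSeries.coeff n F := by
  simp [intCoeff]

theorem intCoeff_of_neg {R : Type*} [CommRing R] (F : PowerSeries R) {n : ℤ} (hn : n < 0) :
    intCoeff F n = 0 := if_neg (not_le.mpr hn)

theorem intCoeff_one_sub_mul {R : Type*} [CommRing R] (x : R) (F : PowerSeries R) (n : ℤ) :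
    intCoeff ((1 - PowerSeries.C x * PowerSeries.X) * F) n
      = intCoeff F n - x * intCoeff F (n - 1) := by
  rcases lt_or_ge n 0 with hn | hn
  · simp [intCoeff_of_neg, hn, show n - 1 < 0 by omega]
  lift n to ℕ using hn
  have h : (1 - PowerSeries.C x * PowerSeries.X) * F
      = F - PowerSeries.C x * (PowerSeries.X * F) := by ring
  rw [h, intCoeff_natCast, map_sub, PowerSeries.coeff_C_mul, intCoeff_natCast]
  cases n with
  | zero => simp [intCoeff_of_neg]
  | succ n =>
    rw [PowerSeries.coeff_succ_X_mul, show ((n + 1 : ℕ) : ℤ) - 1 = (n : ℤ) by simp,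
      intCoeff_natCast]

/-- The lower triangular Toeplitz matrix of a power series. -/
noncomputable def toeplitz {R : Type*} [CommRing R] (N : ℕ) (F : PowerSeries R) :
    Matrix (Fin N) (Fin N) R :=
  Matrix.of fun p q => intCoeff F ((p : ℤ) - (q : ℤ))

theorem toeplitz_mul {R : Type*} [CommRing R] (N : ℕ) (F G : PowerSeries R) :
    toeplitz N F * toeplitz N G = toeplitz N (F * G) := by
  ext p r
  simp only [toeplitz, Matrix.mul_apply, Matrix.of_apply]
  rcases lt_or_ge p r with h | h
  · rw [intCoeff_of_neg _ (by omega)]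
    refine Finset.sum_eq_zero fun q _ => ?_
    rcases lt_or_ge p q with hq | hq
    · rw [intCoeff_of_neg _ (by omega), zero_mul]
    · rw [intCoeff_of_neg G (by omega), mul_zero]
  · have hrp : (r : ℕ) ≤ p := h
    have hpr : ((p : ℕ) : ℤ) - (r : ℕ) = (((p : ℕ) - (r : ℕ) : ℕ) : ℤ) := by omega
    rw [hpr, intCoeff_natCast, PowerSeries.coeff_mul]
    symm
    have hlt : ∀ a ∈ Finset.HasAntidiagonal.antidiagonal ((p : ℕ) - (r : ℕ)),
        (r : ℕ) + a.2 < N := fun a ha => by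
      have := Finset.HasAntidiagonal.mem_antidiagonal.mp ha
      have : (r : ℕ) ≤ p := h
      omega
    refine Finset.sum_of_injOn
      (fun a => if h : (r : ℕ) + a.2 < N then ⟨r + a.2, h⟩ else p) ?_ ?_ ?_ ?_
    · intro a ha b hb hab
      simp only [Finset.mem_coe] at ha hb
      simp only [hlt a ha, hlt b hb, dite_true, Fin.mk.injEq] at hab
      have := Finset.HasAntidiagonal.mem_antidiagonal.mp ha
      have := Finset.HasAntidiagonal.mem_antidiagonal.mp hb
      ext <;> omega
    · intro a _
      simp
    · intro q _ hq
      rcases lt_or_ge p q with hpq | hpq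
      · rw [intCoeff_of_neg _ (by omega), zero_mul]
      rcases lt_or_ge q r with hqr | hqr
      · rw [intCoeff_of_neg G (by omega), mul_zero]
      refine absurd ⟨((p : ℕ) - q, (q : ℕ) - r), ?_, ?_⟩ hq
      · have : (q : ℕ) ≤ p := hpq
        have : (r : ℕ) ≤ q := hqr
        simp only [Finset.mem_coe, Finset.HasAntidiagonal.mem_antidiagonal]
        omega
      · have : (r : ℕ) ≤ q := hqr
        have h2 : (r : ℕ) + (q - r) = q := by omega
        simp [h2]
    · intro a ha
      simp only [hlt a ha, dite_true]
      have := Finset.HasAntidiagonal.mem_antidiagonal.mp ha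
      have : (r : ℕ) ≤ p := h
      rw [show ((p : ℕ) : ℤ) - ((r + a.2 : ℕ) : ℤ) = (a.1 : ℕ) by omega,
        show (((r : ℕ) + a.2 : ℕ) : ℤ) - (r : ℕ) = (a.2 : ℕ) by omega,
        intCoeff_natCast, intCoeff_natCast]

theorem toeplitz_one {R : Type*} [CommRing R] (N : ℕ) :
    toeplitz N (1 : PowerSeries R) = 1 := by
  ext p q
  rw [toeplitz, Matrix.of_apply, Matrix.one_apply]
  rcases lt_or_ge p q with h | h
  · rw [intCoeff_of_neg _ (by omega), if_neg h.ne]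
  · have h' : (q : ℕ) ≤ p := h
    rw [show ((p : ℕ) : ℤ) - (q : ℕ) = ((p - q : ℕ) : ℤ) by omega, intCoeff_natCast,
      PowerSeries.coeff_one]
    congr 1
    rw [Fin.ext_iff, eq_iff_iff]
    omega

theorem det_toeplitz {R : Type*} [CommRing R] (N : ℕ) (F : PowerSeries R)
    (hF : PowerSeries.constantCoeff F = 1) : (toeplitz N F).det = 1 := by
  rw [Matrix.det_of_isLowerTriangular]
  · refine Finset.prod_eq_one fun i _ => ?_
    rw [toeplitz, Matrix.of_apply, sub_self, ← Nat.cast_zero, intCoeff_natCast]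
    simpa using hF
  · intro i j hij
    have : i < j := hij
    exact intCoeff_of_neg _ (by omega)

/-- Jacobi's identity for complementary minors, for blocks in standard position. -/
theorem det_block₁₁_eq_det_mul_det_block₂₂ {R m n : Type*} [CommRing R] [Fintype m] [Fintype n]
    [DecidableEq m] [DecidableEq n] (M M' : Matrix (m ⊕ n) (m ⊕ n) R) (h : M' * M = 1) :
    M.toBlocks₁₁.det = M.det * M'.toBlocks₂₂.det := by
  have key : M * Matrix.fromBlocks 1 M'.toBlocks₁₂ 0 M'.toBlocks₂₂
      = Matrix.fromBlocks M.toBlocks₁₁ 0 M.toBlocks₂₁ 1 := by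
    have h' : M * M' = 1 := mul_eq_one_comm.mp h
    rw [← Matrix.fromBlocks_toBlocks M, ← Matrix.fromBlocks_toBlocks M',
      Matrix.fromBlocks_multiply, ← Matrix.fromBlocks_one, Matrix.fromBlocks_inj] at h'
    conv_lhs => rw [← Matrix.fromBlocks_toBlocks M]
    rw [Matrix.fromBlocks_multiply, h'.2.1, h'.2.2.2]
    simp
  have := congrArg Matrix.det key
  rw [Matrix.det_mul, Matrix.det_fromBlocks_zero₂₁, Matrix.det_fromBlocks_zero₁₂] at this
  simpa using this.symm

/-- The parts of the conjugate partition. -/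
def conjPart {n : ℕ} (μ : Fin n → ℕ) (j : ℕ) : ℕ :=
  (Finset.univ.filter fun i => j + 1 ≤ μ i).card

theorem lt_conjPart_iff {n : ℕ} {μ : Fin n → ℕ} (hμ : Antitone μ) (i : Fin n) (j : ℕ) :
    (i : ℕ) < conjPart μ j ↔ j < μ i := by
  constructor
  · intro h
    by_contra! hj
    refine absurd h (not_lt.mpr ?_)
    rw [← Fin.card_Iio i]
    refine Finset.card_le_card fun k hk => ?_
    rw [Finset.mem_Iio]
    by_contra! hik
    have := (Finset.mem_filter.mp hk).2
    have := hμ hik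
    omega
  · intro h
    rw [← Nat.succ_le_iff, Nat.succ_eq_add_one, ← Fin.card_Iic i]
    refine Finset.card_le_card fun k hk => ?_
    have := hμ (Finset.mem_Iic.mp hk)
    exact Finset.mem_filter.mpr ⟨Finset.mem_univ _, by omega⟩

theorem conjPart_le {n : ℕ} (μ : Fin n → ℕ) (j : ℕ) : conjPart μ j ≤ n :=
  (Finset.card_le_univ _).trans_eq (Fintype.card_fin n)

theorem conjPart_anti {n : ℕ} (μ : Fin n → ℕ) : Antitone (conjPart μ) := fun a b hab =>
  Finset.card_le_card <| Finset.monotone_filter_right _ fun i _ (h : b + 1 ≤ μ i) => by omega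

/-- The map sending the two blocks of `Fin (n + m)` increasingly to the positions of the
vertical and horizontal steps of the boundary path of a partition inside an `n × m` box. -/
def boundaryMap {n m : ℕ} (μ : Fin n → ℕ) (hm : ∀ i, μ i ≤ m) : Fin (n + m) → Fin (n + m) :=
  Fin.addCases (fun i => ⟨μ i.rev + i, by have := hm i.rev; omega⟩)
    (fun j => ⟨n + j - conjPart μ j, by omega⟩)

theorem boundaryMap_lt_iff {n m : ℕ} {μ : Fin n → ℕ} (hμ : Antitone μ) (hm : ∀ i, μ i ≤ m)
    (i : Fin n) (j : Fin m) :
    boundaryMap μ hm (Fin.castAdd m i) < boundaryMap μ hm (Fin.natAdd n j) ↔ μ i.rev ≤ j := by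
  simp only [boundaryMap, Fin.addCases_left, Fin.addCases_right, Fin.mk_lt_mk]
  have h := lt_conjPart_iff hμ i.rev j
  have := conjPart_le μ j
  rw [Fin.val_rev] at h
  constructor <;> intro h' <;> by_contra! h'' <;> omega

theorem boundaryMap_castAdd_ne {n m : ℕ} {μ : Fin n → ℕ} (hμ : Antitone μ) (hm : ∀ i, μ i ≤ m)
    (i : Fin n) (j : Fin m) :
    boundaryMap μ hm (Fin.castAdd m i) ≠ boundaryMap μ hm (Fin.natAdd n j) := by
  simp only [boundaryMap, Fin.addCases_left, Fin.addCases_right, ne_eq, Fin.mk.injEq]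
  have h := lt_conjPart_iff hμ i.rev j
  have := conjPart_le μ j
  rw [Fin.val_rev] at h
  omega

theorem boundaryMap_castAdd_strictMono {n m : ℕ} {μ : Fin n → ℕ} (hμ : Antitone μ)
    (hm : ∀ i, μ i ≤ m) : StrictMono fun i : Fin n => boundaryMap μ hm (Fin.castAdd m i) := by
  intro i k hik
  simp only [boundaryMap, Fin.addCases_left, Fin.mk_lt_mk]
  have := hμ (Fin.rev_lt_rev.mpr hik).le
  omega

theorem boundaryMap_natAdd_strictMono {n m : ℕ} (μ : Fin n → ℕ) (hm : ∀ i, μ i ≤ m) :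
    StrictMono fun j : Fin m => boundaryMap μ hm (Fin.natAdd n j) := by
  intro j k hjk
  simp only [boundaryMap, Fin.addCases_right, Fin.mk_lt_mk]
  have h1 := conjPart_anti μ (show (j : ℕ) ≤ k from hjk.le)
  have h2 := conjPart_le μ j
  omega

theorem boundaryMap_injective {n m : ℕ} {μ : Fin n → ℕ} (hμ : Antitone μ) (hm : ∀ i, μ i ≤ m) :
    Function.Injective (boundaryMap μ hm) := by
  intro a b
  induction a using Fin.addCases with
  | left i =>
    induction b using Fin.addCases with
    | left k => exact fun h => congrArg _ ((boundaryMap_castAdd_strictMono hμ hm).injective h)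
    | right k => exact fun h => absurd h (boundaryMap_castAdd_ne hμ hm i k)
  | right i =>
    induction b using Fin.addCases with
    | left k => exact fun h => absurd h.symm (boundaryMap_castAdd_ne hμ hm k i)
    | right k => exact fun h => congrArg _ ((boundaryMap_natAdd_strictMono μ hm).injective h)

/-- The permutation of `Fin (n + m)` given by `boundaryMap`. -/
noncomputable def boundaryPerm {n m : ℕ} {μ : Fin n → ℕ} (hμ : Antitone μ)
    (hm : ∀ i, μ i ≤ m) : Equiv.Perm (Fin (n + m)) :=
  Equiv.ofBijective _ (Finite.injective_iff_bijective.mp (boundaryMap_injective hμ hm))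

theorem prod_ite_le_eq_neg_one_pow (m k : ℕ) (hk : k ≤ m) :
    ∏ j : Fin m, (if k ≤ (j : ℕ) then (1 : ℤˣ) else -1) = (-1) ^ k := by
  rw [Fin.prod_univ_eq_prod_range (fun j => if k ≤ j then (1 : ℤˣ) else -1) m,
    ← Finset.prod_range_mul_prod_Ico _ hk,
    Finset.prod_congr rfl fun j hj => if_neg (not_le.mpr (Finset.mem_range.mp hj)),
    Finset.prod_congr rfl fun j hj => if_pos (Finset.mem_Ico.mp hj).1]
  simp

theorem sign_boundaryPerm {n m : ℕ} {μ : Fin n → ℕ} (hμ : Antitone μ) (hm : ∀ i, μ i ≤ m) :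
    Equiv.Perm.sign (boundaryPerm hμ hm) = (-1) ^ ∑ i, μ i := by
  have hioi : ∀ i : Fin (n + m), Finset.Ioi i = Finset.univ.filter fun j => i < j := fun i => by
    ext; simp
  have hval : ∀ a, boundaryPerm hμ hm a = boundaryMap μ hm a := fun _ => rfl
  simp only [Equiv.Perm.sign_eq_prod_prod_Ioi, hioi, Finset.prod_filter, hval]
  rw [Fin.prod_univ_add, ← Finset.prod_pow_eq_pow_sum, ← Equiv.prod_comp Fin.revPerm]
  conv_rhs => rw [← mul_one (∏ i, _)]
  congr 1
  · refine Finset.prod_congr rfl fun i _ => ?_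
    rw [Fin.prod_univ_add, Finset.prod_eq_one, one_mul, Fin.revPerm_apply,
      ← prod_ite_le_eq_neg_one_pow m _ (hm _)]
    · refine Finset.prod_congr rfl fun j _ => ?_
      rw [if_pos]
      · simp only [boundaryMap_lt_iff hμ, Fin.rev_rev]
      rw [Fin.lt_def, Fin.val_castAdd, Fin.val_natAdd]
      omega
    · intro k _
      split_ifs with h1 h2
      · rfl
      · exact absurd (boundaryMap_castAdd_strictMono hμ hm h1) h2
      · rfl
  · refine Finset.prod_eq_one fun j _ => ?_
    rw [Fin.prod_univ_add, Finset.prod_eq_one, one_mul, Finset.prod_eq_one]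
    · intro k _
      split_ifs with h1 h2
      · rfl
      · exact absurd (boundaryMap_natAdd_strictMono μ hm ((Fin.natAdd_lt_natAdd_iff n).mp h1)) h2
      · rfl
    · intro k _
      rw [if_neg]
      rw [Fin.lt_def, Fin.val_castAdd, Fin.val_natAdd]
      omega

/-- The equality of the Jacobi–Trudi and dual Jacobi–Trudi determinants for a pair of mutually
inverse power series. -/
theorem det_intCoeff_eq_det_intCoeff_conjPart {R : Type*} [CommRing R] {F G : PowerSeries R}
    (hFG : F * G = 1) (hF : PowerSeries.constantCoeff F = 1) {n m : ℕ} {μ : Fin n → ℕ}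
    (hμ : Antitone μ) (hm : ∀ i, μ i ≤ m) :
    (Matrix.of fun a b : Fin n => intCoeff F ((μ a : ℤ) - (a : ℕ) + (b : ℕ))).det
      = (-1) ^ (∑ i, μ i) * (Matrix.of fun a b : Fin m =>
          intCoeff G ((conjPart μ a : ℤ) - (a : ℕ) + (b : ℕ))).det := by
  let σ := boundaryPerm hμ hm
  let e : Fin n ⊕ Fin m ≃ Fin (n + m) := finSumFinEquiv
  let M := ((toeplitz (n + m) F).submatrix σ id).submatrix e e
  let M' := ((toeplitz (n + m) G).submatrix id σ).submatrix e e
  have hM : M.det = (-1) ^ ∑ i, μ i := by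
    rw [Matrix.det_submatrix_equiv_self, Matrix.det_permute, det_toeplitz _ _ hF,
      sign_boundaryPerm]
    simp
  have hMM : M' * M = 1 := by
    rw [Matrix.submatrix_mul_equiv, Matrix.submatrix_mul_equiv, toeplitz_mul, mul_comm, hFG,
      toeplitz_one, Matrix.submatrix_id_id, Matrix.submatrix_one_equiv]
  have h := det_block₁₁_eq_det_mul_det_block₂₂ M M' hMM
  rw [hM] at h
  rw [← Matrix.det_transpose (Matrix.of fun a b : Fin m => _),
    ← Matrix.det_submatrix_equiv_self Fin.revPerm]
  convert h using 2
  · ext a b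
    simp only [Matrix.submatrix_apply, Matrix.of_apply, Matrix.toBlocks₁₁, M, toeplitz, e, σ,
      finSumFinEquiv_apply_left, boundaryPerm, Equiv.ofBijective_apply, boundaryMap,
      Fin.addCases_left, Fin.revPerm_apply, id, Fin.val_castAdd, Fin.val_rev]
    congr 1
    omega
  · congr 1
    ext a b
    have := conjPart_le μ b
    simp only [Matrix.submatrix_apply, Matrix.of_apply, Matrix.toBlocks₂₂, M', toeplitz, e, σ,
      finSumFinEquiv_apply_right, boundaryPerm, Equiv.ofBijective_apply, boundaryMap,
      Fin.addCases_right, id, Fin.val_natAdd, Matrix.transpose_apply]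
    congr 1
    omega

/-- The power series `Σ_{n ≥ 1} t_n k^n`. -/
noncomputable def timeSeries {A : Type*} [CommRing A] (t : ℕ → A) : PowerSeries A :=
  PowerSeries.mk fun n => if n = 0 then 0 else t n

/-- The generating series of the elementary Schur polynomials evaluated at `t`. -/
noncomputable def schurSeries {A : Type*} [CommRing A] [Algebra ℚ A] (t : ℕ → A) :
    PowerSeries A :=
  PowerSeries.mk fun n => aeval t (pS n)

theorem coeff_timeSeries_pow {A : Type*} [CommRing A] (t : ℕ → A) (m n : ℕ) :
    PowerSeries.coeff n (timeSeries t ^ m)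
      = ∑ c ∈ Finset.univ.filter (fun c : Fin m → Fin (n + 1) =>
          (∑ j, ((c j : ℕ))) = n ∧ ∀ j, 1 ≤ (c j : ℕ)), ∏ j, t (c j) := by
  rw [← Fin.prod_const, PowerSeries.coeff_prod]
  symm
  refine Finset.sum_of_injOn (fun c => Finsupp.equivFunOnFinite.symm fun j => (c j : ℕ)) ?_ ?_ ?_ ?_
  · intro c _ d _ h
    have h' := Finsupp.equivFunOnFinite.symm.injective h
    funext j
    exact Fin.ext (congrFun h' j)
  · intro c hc
    simp only [Finset.coe_filter, Set.mem_ofPred_eq] at hc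
    simp [hc.2.1]
  · intro f hf hne
    rw [Finset.mem_finsuppAntidiag] at hf
    by_cases h0 : ∃ j, f j = 0
    · obtain ⟨j, hj⟩ := h0
      refine Finset.prod_eq_zero (Finset.mem_univ j) ?_
      simp [timeSeries, hj]
    · push Not at h0
      have hlt : ∀ j, f j < n + 1 := fun j => by
        have : f j ≤ Finset.univ.sum f :=
          Finset.single_le_sum (fun i _ => Nat.zero_le _) (Finset.mem_univ j)
        have := hf.1
        omega
      refine absurd ⟨fun j => ⟨f j, hlt j⟩, ?_, ?_⟩ hne
      · simpa [hf.1] using fun j => Nat.one_le_iff_ne_zero.mpr (h0 j)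
      · ext j
        simp
  · intro c hc
    refine Finset.prod_congr rfl fun j _ => ?_
    have := (Finset.mem_filter.mp hc).2.2 j
    simp only [timeSeries, PowerSeries.coeff_mk, Finsupp.equivFunOnFinite_symm_apply_apply]
    rw [if_neg (by omega)]

theorem coeff_schurSeries {A : Type*} [CommRing A] [Algebra ℚ A] (t : ℕ → A) {n N : ℕ}
    (h : n ≤ N) :
    PowerSeries.coeff n (schurSeries t) = PowerSeries.coeff n
      (∑ m ∈ Finset.range (N + 1), (Nat.factorial m : ℚ)⁻¹ • timeSeries t ^ m) := by
  rw [map_sum, schurSeries, PowerSeries.coeff_mk, pS, map_sum]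
  refine Finset.sum_subset_zero_on_sdiff (Finset.range_mono (by omega)) ?_ ?_
  · intro m hm
    rw [Finset.mem_sdiff, Finset.mem_range, Finset.mem_range] at hm
    have hX : (PowerSeries.X : PowerSeries A) ^ m ∣ timeSeries t ^ m :=
      pow_dvd_pow_of_dvd (PowerSeries.X_dvd_iff.mpr (by simp [timeSeries])) m
    rw [PowerSeries.coeff_smul, PowerSeries.X_pow_dvd_iff.mp hX n (by omega), smul_zero]
  · intro m _
    rw [PowerSeries.coeff_smul, coeff_timeSeries_pow, map_smul, map_sum]
    simp

theorem derivative_schurSeries {A : Type*} [CommRing A] [Algebra ℚ A] (t : ℕ → A) :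
    PowerSeries.derivative A (schurSeries t)
      = PowerSeries.derivative A (timeSeries t) * schurSeries t := by
  have hS : ∀ N : ℕ, PowerSeries.derivative A
      (∑ m ∈ Finset.range (N + 1), (Nat.factorial m : ℚ)⁻¹ • timeSeries t ^ m)
      = PowerSeries.derivative A (timeSeries t)
        * ∑ m ∈ Finset.range N, (Nat.factorial m : ℚ)⁻¹ • timeSeries t ^ m := by
    intro N
    rw [Finset.sum_range_succ', map_add, map_sum, Finset.mul_sum, pow_zero,
      Derivation.map_smul_of_tower, Derivation.map_one_eq_zero, smul_zero, add_zero]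
    refine Finset.sum_congr rfl fun m _ => ?_
    have hm : (m : ℚ) + 1 ≠ 0 := by positivity
    rw [Derivation.map_smul_of_tower, Derivation.leibniz_pow, Nat.add_sub_cancel, smul_eq_mul,
      ← Nat.cast_smul_eq_nsmul ℚ, smul_smul, mul_smul_comm, mul_comm (timeSeries t ^ m)]
    congr 1
    rw [Nat.factorial_succ]
    push_cast
    field_simp
  ext n
  rw [PowerSeries.coeff_derivative, coeff_schurSeries t le_rfl, ← PowerSeries.coeff_derivative, hS,
    PowerSeries.coeff_mul, PowerSeries.coeff_mul]
  refine Finset.sum_congr rfl fun a ha => ?_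
  have := Finset.HasAntidiagonal.mem_antidiagonal.mp ha
  rw [coeff_schurSeries t (N := n) (by omega)]

theorem constantCoeff_schurSeries {A : Type*} [CommRing A] [Algebra ℚ A] (t : ℕ → A) :
    PowerSeries.constantCoeff (schurSeries t) = 1 := by
  rw [← PowerSeries.coeff_zero_eq_constantCoeff_apply, coeff_schurSeries t le_rfl]
  simp

/-- A power series with constant coefficient `1` is determined by its logarithmic derivative. -/
theorem eq_schurSeries_of_derivative {A : Type*} [CommRing A] [Algebra ℚ A] {t : ℕ → A}
    {F : PowerSeries A} (hF : PowerSeries.constantCoeff F = 1)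
    (hd : PowerSeries.derivative A F = PowerSeries.derivative A (timeSeries t) * F) :
    F = schurSeries t := by
  ext n
  induction n using Nat.strong_induction_on with
  | _ n ih =>
    cases n with
    | zero => simp [hF, constantCoeff_schurSeries]
    | succ n =>
      have hu : IsUnit ((n : A) + 1) := by
        have h : IsUnit ((n : ℚ) + 1) := (by positivity : (n : ℚ) + 1 ≠ 0).isUnit
        simpa using h.map (algebraMap ℚ A)
      refine hu.mul_right_cancel ?_
      rw [← PowerSeries.coeff_derivative, ← PowerSeries.coeff_derivative, hd,
        derivative_schurSeries, PowerSeries.coeff_mul, PowerSeries.coeff_mul]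
      refine Finset.sum_congr rfl fun a ha => ?_
      rw [ih _ (by have := Finset.HasAntidiagonal.mem_antidiagonal.mp ha; omega)]

theorem schurSeries_add {A : Type*} [CommRing A] [Algebra ℚ A] (s t : ℕ → A) :
    schurSeries (s + t) = schurSeries s * schurSeries t := by
  symm
  apply eq_schurSeries_of_derivative
  · simp [constantCoeff_schurSeries]
  · have h : timeSeries (s + t) = timeSeries s + timeSeries t := by
      ext n
      by_cases hn : n = 0 <;> simp [timeSeries, hn]
    rw [h, map_add, Derivation.leibniz, derivative_schurSeries, derivative_schurSeries,
      smul_eq_mul, smul_eq_mul]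
    ring

theorem schurSeries_zero {A : Type*} [CommRing A] [Algebra ℚ A] :
    schurSeries (0 : ℕ → A) = 1 := by
  symm
  apply eq_schurSeries_of_derivative
  · simp
  · have h : timeSeries (0 : ℕ → A) = 0 := by ext; simp [timeSeries]
    simp [h]

/-- The times `[x] = (x, x²/2, x³/3, ...)`. -/
noncomputable def bracket {A : Type*} [CommRing A] [Algebra ℚ A] (x : A) (n : ℕ) : A :=
  (n : ℚ)⁻¹ • x ^ n

theorem coeff_schurSeries_bracket {A : Type*} [CommRing A] [Algebra ℚ A] (x : A) (n : ℕ) :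
    PowerSeries.coeff n (schurSeries (bracket x)) = x ^ n := by
  suffices h : PowerSeries.mk (fun n => x ^ n) = schurSeries (bracket x) by
    rw [← h, PowerSeries.coeff_mk]
  apply eq_schurSeries_of_derivative
  · simp
  · ext n
    have h : ∀ k : ℕ, PowerSeries.coeff k (PowerSeries.derivative A (timeSeries (bracket x)))
        = x ^ (k + 1) := fun k => by
      have hk : ((k : ℚ) + 1) ≠ 0 := by positivity
      have : (k : A) + 1 = algebraMap ℚ A (k + 1) := by simp
      rw [PowerSeries.coeff_derivative, timeSeries, PowerSeries.coeff_mk, if_neg k.succ_ne_zero,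
        bracket, this, mul_comm, ← Algebra.smul_def, smul_smul, Nat.cast_succ,
        mul_inv_cancel₀ hk, one_smul]
    rw [PowerSeries.coeff_mul, PowerSeries.coeff_derivative, PowerSeries.coeff_mk]
    rw [Finset.sum_congr rfl (g := fun _ => x ^ (n + 1)) fun a ha => ?_]
    · simp [mul_comm]
    · rw [h, PowerSeries.coeff_mk, ← pow_add, ← Finset.HasAntidiagonal.mem_antidiagonal.mp ha]
      ring

theorem one_sub_mul_schurSeries_bracket {A : Type*} [CommRing A] [Algebra ℚ A] (x : A) :
    (1 - PowerSeries.C x * PowerSeries.X) * schurSeries (bracket x) = 1 := by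
  ext n
  rw [sub_mul, one_mul, mul_assoc, map_sub, PowerSeries.coeff_C_mul]
  cases n with
  | zero => simp [constantCoeff_schurSeries]
  | succ n =>
    simp [PowerSeries.coeff_succ_X_mul, coeff_schurSeries_bracket, pow_succ',
      PowerSeries.coeff_one]

theorem schurSeries_sum_bracket_mul {A ι : Type*} [CommRing A] [Algebra ℚ A] (s : Finset ι)
    (y : ι → A) :
    (∏ i ∈ s, (1 - PowerSeries.C (y i) * PowerSeries.X)) * schurSeries (∑ i ∈ s, bracket (y i))
      = 1 := by
  classical
  induction s using Finset.induction_on with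
  | empty => simp [schurSeries_zero]
  | insert a s ha ih =>
    rw [Finset.prod_insert ha, Finset.sum_insert ha, schurSeries_add, mul_mul_mul_comm, ih,
      one_sub_mul_schurSeries_bracket, one_mul]

theorem schurSeries_bracket_sub_sum {A ι : Type*} [CommRing A] [Algebra ℚ A] (s : Finset ι)
    (x : A) (y : ι → A) :
    schurSeries (bracket x - ∑ i ∈ s, bracket (y i))
      = (∏ i ∈ s, (1 - PowerSeries.C (y i) * PowerSeries.X)) * schurSeries (bracket x) := by
  have h := schurSeries_add (bracket x - ∑ i ∈ s, bracket (y i)) (∑ i ∈ s, bracket (y i))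
  rw [sub_add_cancel] at h
  rw [h, mul_left_comm, schurSeries_sum_bracket_mul, mul_one]

theorem coeff_schurSeries_bracket_sub_sum {A ι : Type*} [CommRing A] [Algebra ℚ A] (s : Finset ι)
    (x : A) (y : ι → A) (k : ℕ) :
    PowerSeries.coeff (s.card + k) (schurSeries (bracket x - ∑ i ∈ s, bracket (y i)))
      = x ^ k * ∏ i ∈ s, (x - y i) := by
  classical
  induction s using Finset.induction_on generalizing k with
  | empty => simp [coeff_schurSeries_bracket]
  | insert a s ha ih =>
    rw [schurSeries_bracket_sub_sum, Finset.prod_insert ha, mul_assoc,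
      ← schurSeries_bracket_sub_sum, Finset.card_insert_of_notMem ha, sub_mul, one_mul, mul_assoc,
      map_sub, PowerSeries.coeff_C_mul, add_right_comm, PowerSeries.coeff_succ_X_mul, ih,
      add_assoc, ih, Finset.prod_insert ha]
    ring

theorem aeval_pz {A : Type*} [CommRing A] [Algebra ℚ A] (t : ℕ → A) (n : ℤ) :
    aeval t (pz n) = intCoeff (schurSeries t) n := by
  rw [pz, intCoeff, apply_ite (aeval t), map_zero, schurSeries, PowerSeries.coeff_mk]

theorem aeval_schur {A : Type*} [CommRing A] [Algebra ℚ A] (t : ℕ → A) {l : ℕ} (lam : Fin l → ℕ) :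
    aeval t (schur lam) = (Matrix.of fun a b : Fin l =>
      intCoeff (schurSeries t) ((lam a : ℤ) - ((a : ℕ) : ℤ) + ((b : ℕ) : ℤ))).det := by
  rw [schur, AlgHom.map_det]
  congr 1
  ext1 a b
  exact aeval_pz t _

/-- Subtracting `x` times the previous column reduces the Jacobi–Trudi determinant of a series
whose coefficients are eventually geometric with ratio `x` to one of smaller size. -/
theorem det_intCoeff_eq_coeff_mul_det {R : Type*} [CommRing R] {H F : PowerSeries R} {x c : R}
    {d n : ℕ} (hF : (1 - PowerSeries.C x * PowerSeries.X) * H = F)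
    (hH : ∀ k, PowerSeries.coeff (d + k) H = x ^ k * c) {lam : Fin (n + 1) → ℕ} (hd : lam 0 = d) :
    (Matrix.of fun a b : Fin (n + 1) =>
        intCoeff H ((lam a : ℤ) - ((a : ℕ) : ℤ) + ((b : ℕ) : ℤ))).det
      = c * (Matrix.of fun a b : Fin n =>
        intCoeff F ((lam a.succ : ℤ) - ((a : ℕ) : ℤ) + ((b : ℕ) : ℤ))).det := by
  let B : Matrix (Fin (n + 1)) (Fin (n + 1)) R := Matrix.of fun a b =>
    Fin.cases (intCoeff H ((lam a : ℤ) - ((a : ℕ) : ℤ)))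
      (fun j => intCoeff F ((lam a : ℤ) - ((a : ℕ) : ℤ) + ((j : ℕ) + 1))) b
  rw [Matrix.det_eq_of_forall_col_eq_smul_add_pred (B := B) (fun _ => x), Matrix.det_succ_row_zero,
    Fin.sum_univ_succ, Finset.sum_eq_zero]
  · have hB : B 0 0 = c := by
      simp only [B, Matrix.of_apply, Fin.cases_zero, Fin.val_zero, hd, Nat.cast_zero, sub_zero,
        intCoeff_natCast]
      simpa using hH 0
    rw [hB, Fin.val_zero, pow_zero, one_mul, add_zero]
    congr 2
    ext a b
    simp only [B, Matrix.submatrix_apply, Matrix.of_apply, Fin.succAbove_zero, Fin.cases_succ,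
      Fin.val_succ]
    congr 1
    push_cast
    ring
  · intro j _
    have hB : B 0 j.succ = 0 := by
      simp only [B, Matrix.of_apply, Fin.cases_succ, ← hF, intCoeff_one_sub_mul, Fin.val_zero, hd]
      rw [show (d : ℤ) - ((0 : ℕ) : ℤ) + ((j : ℕ) + 1) = ((d + (j + 1) : ℕ) : ℤ) by
          push_cast; ring,
        show ((d + ((j : ℕ) + 1) : ℕ) : ℤ) - 1 = ((d + j : ℕ) : ℤ) by push_cast; ring,
        intCoeff_natCast, intCoeff_natCast, hH, hH]
      ring
    rw [hB]
    ring
  · intro a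
    simp [B]
  · intro a j
    simp only [B, Matrix.of_apply, Fin.cases_succ, ← hF, intCoeff_one_sub_mul, Fin.val_succ,
      Fin.val_castSucc]
    push_cast
    rw [add_sub_assoc _ ((j : ℤ) + 1) 1, add_sub_cancel_right]
    ring


/-- Let `λ` be a partition of length `l ≥ 1`, `λ'` its conjugate of length
`l' = λ_1`, and `λ̃' = (λ'_1 - 1, ..., λ'_{l'} - 1)`. Then, as polynomials in
`x, x_1, ..., x_{l'}` (here `x = X 0` and `x_i = X i.succ`):
`s_λ([x] - Σ_{i=1}^{l'} [x_i]) = (-1)^{N_{λ,1}} · s_{λ̃'}(Σ_{i=1}^{l'} [x_i]) ·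
Π_{j=1}^{l'} (x - x_j)`, where `N_{λ,1} = λ_2 + ⋯ + λ_l`. -/
theorem statement11 (l : ℕ) (hl : 1 ≤ l) (lam : Fin l → ℕ)
    (hanti : Antitone lam) (hpos : ∀ i, 1 ≤ lam i)
    (l' : ℕ) (hl' : l' = pad lam 0)
    (tlam : Fin l' → ℕ)
    (htlam : ∀ a : Fin l',
      tlam a = (Finset.univ.filter (fun j : Fin l => (a : ℕ) + 1 ≤ lam j)).card - 1) :
    aeval (fun n : ℕ => (n : ℚ)⁻¹ •
        ((X 0 : MvPolynomial (Fin (l' + 1)) ℚ) ^ n - ∑ i : Fin l', X i.succ ^ n))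
      (schur lam)
    = (-1 : MvPolynomial (Fin (l' + 1)) ℚ) ^ (∑ a ∈ Finset.Ico 1 l, pad lam a)
      * rename Fin.succ (toPowerSums l' (schur tlam))
      * ∏ i : Fin l', (X 0 - X i.succ) := by
  obtain ⟨n, rfl⟩ : ∃ n, l = n + 1 := ⟨l - 1, by omega⟩
  have hl0 : lam 0 = l' := by simp [hl', pad]
  let A := MvPolynomial (Fin (l' + 1)) ℚ
  let y : Fin l' → A := fun i => X i.succ
  have ht : (fun n : ℕ => (n : ℚ)⁻¹ • ((X 0 : A) ^ n - ∑ i : Fin l', X i.succ ^ n))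
      = bracket (X 0) - ∑ i, bracket (y i) := by
    funext n
    simp [bracket, y, smul_sub, Finset.smul_sum]
  have hs : rename Fin.succ (toPowerSums l' (schur tlam))
      = aeval (∑ i, bracket (y i)) (schur tlam) := by
    rw [toPowerSums, ← AlgHom.comp_apply, comp_aeval]
    congr 2
    funext n
    simp [bracket, y, Finset.smul_sum]
  let μ : Fin n → ℕ := fun i => lam i.succ
  have hμ : Antitone μ := fun i j h => hanti (Fin.succ_le_succ_iff.mpr h)
  have hμl : ∀ i, μ i ≤ l' := fun i => hl0 ▸ hanti (Fin.zero_le _)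
  have htl : ∀ a, tlam a = conjPart μ a := fun a => by
    rw [htlam, Fin.card_filter_univ_succ, if_pos (by rw [hl0]; omega), Nat.add_sub_cancel]
    rfl
  have hsum : ∑ a ∈ Finset.Ico 1 (n + 1), pad lam a = ∑ i, μ i := by
    rw [Finset.sum_Ico_eq_sum_range, Nat.add_sub_cancel, ← Fin.sum_univ_eq_sum_range]
    refine Finset.sum_congr rfl fun i _ => ?_
    rw [pad, dif_pos (by omega)]
    exact congrArg lam (Fin.ext (add_comm _ _))
  have hF : (1 - PowerSeries.C (X 0 : A) * PowerSeries.X)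
      * schurSeries (bracket (X 0) - ∑ i, bracket (y i))
      = ∏ i, (1 - PowerSeries.C (y i) * PowerSeries.X) := by
    rw [schurSeries_bracket_sub_sum, mul_left_comm, one_sub_mul_schurSeries_bracket, mul_one]
  have hH := coeff_schurSeries_bracket_sub_sum Finset.univ (X 0 : A) y
  rw [Finset.card_univ, Fintype.card_fin] at hH
  rw [ht, hs, hsum, aeval_schur, aeval_schur, det_intCoeff_eq_coeff_mul_det hF hH hl0,
    det_intCoeff_eq_det_intCoeff_conjPart (schurSeries_sum_bracket_mul Finset.univ y)
      (by simp [map_prod]) hμ hμl]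
  simp only [htl]
  ring
end

section
/- Let λ=(λ_1,...,λ_l) be a partition of length l, (w_l,...,w_1) = (λ_1,...,λ_l)+(l−1,...,1,0), and N'_{λ,1} = λ_2+⋯+λ_l − (l−1). Then ∂_1^{N'_{λ,1}} s_λ(t) evaluated at t = [x_1]−[x_2] equals c_λ · s_{(λ_1,1^{l−1})}([x_1]−[x_2]), where c_λ = (N'_{λ,1}! / Π_{i=1}^{l−1}(w_i−1)!) · Π_{1≤i<j≤l−1}(w_j−w_i). -/
open MvPolynomial

/-- Substitution `t_n ↦ (x_1^n - x_2^n)/n`, i.e. `t = [x_1] - [x_2]`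
(here `x_1 = X 0`, `x_2 = X 1`). -/
noncomputable def toDiff (f : MvPolynomial ℕ ℚ) : MvPolynomial (Fin 2) ℚ :=
  aeval (fun n : ℕ => (n : ℚ)⁻¹ • (X 0 ^ n - X 1 ^ n)) f

namespace HookDerivative

/-- The series `Σ_{n≥1} t_n k^n`. -/
noncomputable def timeSeries : PowerSeries (MvPolynomial ℕ ℚ) :=
  PowerSeries.mk fun n => if n = 0 then 0 else X n

lemma coeff_timeSeries_pow (m n : ℕ) :
    PowerSeries.coeff n (timeSeries ^ m) =
      ∑ c ∈ Finset.univ.filter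
        (fun c : Fin m → Fin (n + 1) => (∑ j, ((c j : ℕ))) = n ∧ ∀ j, 1 ≤ (c j : ℕ)),
      ∏ j, X ((c j : ℕ)) := by
  have hpow : timeSeries ^ m = ∏ _j : Fin m, timeSeries := by simp
  rw [hpow, PowerSeries.coeff_prod]
  symm
  refine Finset.sum_of_injOn (fun c => Finsupp.equivFunOnFinite.symm fun j => (c j : ℕ))
    ?_ ?_ ?_ ?_
  · intro c _ d _ h
    funext j
    exact Fin.ext (by simpa using DFunLike.congr_fun h j)
  · intro c hc
    simp only [Finset.coe_filter, Finset.mem_univ, true_and, Set.mem_ofPred_eq] at hc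
    simp [Finset.mem_finsuppAntidiag, hc.1]
  · intro f hf hf'
    rw [Finset.mem_finsuppAntidiag] at hf
    have hzero : ∃ j, f j = 0 := by
      by_contra! hne
      refine hf' ⟨fun j => ⟨f j, Nat.lt_succ_of_le ?_⟩, ?_, ?_⟩
      · rw [← hf.1]
        exact Finset.single_le_sum (f := fun j => f j) (fun _ _ => Nat.zero_le _)
          (Finset.mem_univ j)
      · simpa using ⟨hf.1, fun j => Nat.one_le_iff_ne_zero.2 (hne j)⟩
      · ext j
        simp
    obtain ⟨j, hj⟩ := hzero
    exact Finset.prod_eq_zero (Finset.mem_univ j) (by simp [timeSeries, hj])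
  · intro c hc
    simp only [Finset.mem_filter, Finset.mem_univ, true_and] at hc
    refine Finset.prod_congr rfl fun j _ => ?_
    have := hc.2 j
    simp [timeSeries, show (c j : ℕ) ≠ 0 by omega]

lemma coeff_timeSeries_pow_of_lt {m n : ℕ} (h : n < m) :
    PowerSeries.coeff n (timeSeries ^ m) = 0 := by
  have hX : (PowerSeries.X : PowerSeries (MvPolynomial ℕ ℚ)) ∣ timeSeries := by
    rw [PowerSeries.X_dvd_iff]
    simp [timeSeries]
  exact PowerSeries.X_pow_dvd_iff.1 (pow_dvd_pow_of_dvd hX m) n h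

lemma pS_eq_coeff {n N : ℕ} (h : n ≤ N) :
    pS n = PowerSeries.coeff n
      (∑ m ∈ Finset.range (N + 1), (Nat.factorial m : ℚ)⁻¹ • timeSeries ^ m) := by
  have hlow : pS n = ∑ m ∈ Finset.range (n + 1),
      (Nat.factorial m : ℚ)⁻¹ • PowerSeries.coeff n (timeSeries ^ m) := by
    simp only [pS, coeff_timeSeries_pow]
  rw [hlow, map_sum]
  refine (Finset.sum_subset (Finset.range_mono (by omega)) fun m _ hm => ?_).trans
    (Finset.sum_congr rfl fun m _ => ?_)
  · rw [coeff_timeSeries_pow_of_lt (by simpa using hm), smul_zero]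
  · rfl

lemma pS_zero : pS 0 = 1 := by
  simp [pS_eq_coeff le_rfl]

lemma derivative_mk_pS :
    PowerSeries.derivative _ (PowerSeries.mk pS) =
      PowerSeries.derivative _ timeSeries * PowerSeries.mk pS := by
  ext1 n
  have hexp : PowerSeries.derivative _ (∑ m ∈ Finset.range (n + 1 + 1),
        (Nat.factorial m : ℚ)⁻¹ • timeSeries ^ m) =
      PowerSeries.derivative _ timeSeries *
        ∑ m ∈ Finset.range (n + 1), (Nat.factorial m : ℚ)⁻¹ • timeSeries ^ m := by
    rw [Finset.sum_range_succ', map_add, map_sum, Finset.mul_sum]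
    simp only [pow_zero, Derivation.map_smul_of_tower, Derivation.map_one_eq_zero, smul_zero,
      add_zero]
    refine Finset.sum_congr rfl fun m _ => ?_
    rw [PowerSeries.derivative_pow, Nat.add_sub_cancel, Nat.factorial_succ]
    have : ((m + 1 : ℕ) : PowerSeries (MvPolynomial ℕ ℚ)) * timeSeries ^ m =
        ((m + 1 : ℕ) : ℚ) • timeSeries ^ m := by
      rw [Nat.cast_smul_eq_nsmul, nsmul_eq_mul]
    rw [this, smul_mul_assoc, smul_smul, mul_comm (timeSeries ^ m)]
    rw [mul_smul_comm]
    congr 1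
    push_cast
    field_simp
  rw [PowerSeries.coeff_derivative, PowerSeries.coeff_mk, pS_eq_coeff (le_refl (n + 1)),
    ← PowerSeries.coeff_derivative, hexp, PowerSeries.coeff_mul, PowerSeries.coeff_mul]
  refine Finset.sum_congr rfl fun ij hij => ?_
  rw [PowerSeries.coeff_mk, pS_eq_coeff (Finset.HasAntidiagonal.antidiagonal.snd_le hij)]

lemma eq_of_derivative_eq_mul {R : Type*} [CommRing R] [Algebra ℚ R] {F G P : PowerSeries R}
    (hF : PowerSeries.derivative R F = P * F) (hG : PowerSeries.derivative R G = P * G)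
    (h0 : PowerSeries.coeff 0 F = PowerSeries.coeff 0 G) : F = G := by
  ext n
  induction n using Nat.strong_induction_on with
  | _ n ih =>
    cases n with
    | zero => exact h0
    | succ n =>
      have h1 : PowerSeries.coeff (n + 1) F * ((n : R) + 1) =
          PowerSeries.coeff (n + 1) G * ((n : R) + 1) := by
        rw [← PowerSeries.coeff_derivative, ← PowerSeries.coeff_derivative, hF, hG,
          PowerSeries.coeff_mul, PowerSeries.coeff_mul]
        refine Finset.sum_congr rfl fun ij hij => ?_
        rw [ih ij.2 (Nat.lt_succ_of_le (Finset.HasAntidiagonal.antidiagonal.snd_le hij))]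
      have hu : IsUnit ((n : R) + 1) := by
        have := (isUnit_iff_ne_zero.2 (Nat.cast_add_one_ne_zero n : (n : ℚ) + 1 ≠ 0)).map
          (algebraMap ℚ R)
        simpa using this
      exact hu.mul_right_cancel h1

/-- The substitution `t ↦ [x_1] - [x_2] + (a, 0, 0, ...)`, where `a` is the polynomial variable. -/
noncomputable def shift : MvPolynomial ℕ ℚ →ₐ[ℚ] Polynomial (MvPolynomial (Fin 2) ℚ) :=
  aeval fun n : ℕ => Polynomial.C ((n : ℚ)⁻¹ • (X 0 ^ n - X 1 ^ n)) +
    if n = 1 then Polynomial.X else 0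

lemma shift_pderiv (f : MvPolynomial ℕ ℚ) :
    shift (pderiv 1 f) = Polynomial.derivative (shift f) := by
  induction f using MvPolynomial.induction_on with
  | C a =>
    rw [pderiv_C, map_zero, ← MvPolynomial.algebraMap_eq, AlgHom.commutes]
    exact (Polynomial.derivative_C (a := algebraMap ℚ (MvPolynomial (Fin 2) ℚ) a)).symm
  | add p q hp hq => simp only [map_add, hp, hq]
  | mul_X p n hp =>
    rw [Derivation.leibniz, map_add, smul_eq_mul, smul_eq_mul, map_mul, map_mul, map_mul, hp,
      Polynomial.derivative_mul, pderiv_X]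
    have : shift (Pi.single (M := fun _ => MvPolynomial ℕ ℚ) 1 1 n) =
        Polynomial.derivative (shift (X n)) := by
      by_cases hn : n = 1
      · subst hn
        simp [shift]
      · simp [shift, hn]
    rw [this]
    ring

lemma toDiff_eq_coeff_shift (f : MvPolynomial ℕ ℚ) : toDiff f = (shift f).coeff 0 := by
  have h : aeval (fun n : ℕ => (n : ℚ)⁻¹ • (X 0 ^ n - X 1 ^ n : MvPolynomial (Fin 2) ℚ)) =
      ((Polynomial.aeval (0 : MvPolynomial (Fin 2) ℚ)).restrictScalars ℚ).comp shift := by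
    refine MvPolynomial.algHom_ext fun n => ?_
    by_cases hn : n = 1 <;> simp [shift, hn]
  rw [toDiff, h, Polynomial.coeff_zero_eq_aeval_zero]
  rfl

lemma toDiff_derivs_replicate (N : ℕ) (f : MvPolynomial ℕ ℚ) :
    toDiff (derivs (List.replicate N 1) f) = (Nat.factorial N : ℚ) • (shift f).coeff N := by
  have h : shift (derivs (List.replicate N 1) f) = Polynomial.derivative^[N] (shift f) := by
    induction N with
    | zero => rfl
    | succ N ih =>
      rw [Function.iterate_succ_apply', ← ih, ← shift_pderiv]
      rfl
  rw [toDiff_eq_coeff_shift, h, Polynomial.coeff_iterate_derivative, Nat.zero_add,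
    Nat.descFactorial_self, Nat.cast_smul_eq_nsmul]

/-- The reciprocal factorial, extended by zero to negative integers. -/
noncomputable def invFactorial (n : ℤ) : ℚ :=
  if 0 ≤ n then (Nat.factorial n.toNat : ℚ)⁻¹ else 0

lemma mk_pow_mul {R : Type*} [CommRing R] (x : R) :
    PowerSeries.mk (fun n => x ^ n) * (1 - PowerSeries.C x * PowerSeries.X) = 1 := by
  ext n
  rw [mul_sub, mul_one, mul_left_comm, map_sub]
  cases n with
  | zero => simp
  | succ n =>
    rw [PowerSeries.coeff_C_mul, PowerSeries.coeff_succ_mul_X]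
    simp [pow_succ', PowerSeries.coeff_one]

lemma derivative_mk_pow {R : Type*} [CommRing R] (x : R) :
    PowerSeries.derivative R (PowerSeries.mk fun n => x ^ n) =
      PowerSeries.C x * PowerSeries.mk (fun n => x ^ n) ^ 2 := by
  have h := mk_pow_mul x
  have h' := congrArg (PowerSeries.derivative R) h
  simp only [Derivation.leibniz, map_sub, Derivation.map_one_eq_zero, PowerSeries.derivative_C,
    PowerSeries.derivative_X, smul_eq_mul] at h'
  linear_combination (PowerSeries.mk fun n => x ^ n) * h' -
    (PowerSeries.derivative R (PowerSeries.mk fun n => x ^ n)) * h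

local notation "x₁" => (Polynomial.C (X 0) : Polynomial (MvPolynomial (Fin 2) ℚ))
local notation "x₂" => (Polynomial.C (X 1) : Polynomial (MvPolynomial (Fin 2) ℚ))

/-- The series `exp(a k)`. -/
noncomputable def expSeries : PowerSeries (Polynomial (MvPolynomial (Fin 2) ℚ)) :=
  PowerSeries.mk fun n => (Nat.factorial n : ℚ)⁻¹ • Polynomial.X ^ n

lemma derivative_expSeries :
    PowerSeries.derivative _ expSeries = PowerSeries.C Polynomial.X * expSeries := by
  ext1 n
  rw [PowerSeries.coeff_derivative, PowerSeries.coeff_C_mul, expSeries, PowerSeries.coeff_mk,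
    PowerSeries.coeff_mk, mul_smul_comm, ← pow_succ']
  have : ((n : Polynomial (MvPolynomial (Fin 2) ℚ)) + 1) =
      algebraMap ℚ _ ((n : ℚ) + 1) := by simp
  rw [this, mul_comm, ← Algebra.smul_def, smul_smul, Nat.factorial_succ]
  congr 1
  push_cast
  field_simp

lemma map_shift_derivative_timeSeries :
    PowerSeries.map (shift : MvPolynomial ℕ ℚ →+* _) (PowerSeries.derivative _ timeSeries) =
      PowerSeries.C x₁ * PowerSeries.mk (fun n => x₁ ^ n) -
        PowerSeries.C x₂ * PowerSeries.mk (fun n => x₂ ^ n) + PowerSeries.C Polynomial.X := by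
  ext1 n
  rw [PowerSeries.coeff_map, PowerSeries.coeff_derivative, map_add, map_sub,
    PowerSeries.coeff_C_mul, PowerSeries.coeff_C_mul, PowerSeries.coeff_mk, PowerSeries.coeff_mk,
    PowerSeries.coeff_C]
  have hcast : ((n : Polynomial (MvPolynomial (Fin 2) ℚ)) + 1) =
      Polynomial.C (algebraMap ℚ _ ((n : ℚ) + 1)) := by simp
  have hcoeff : Polynomial.C ((((n + 1 : ℕ) : ℚ))⁻¹ •
        (X 0 ^ (n + 1) - X 1 ^ (n + 1) : MvPolynomial (Fin 2) ℚ)) *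
      ((n : Polynomial (MvPolynomial (Fin 2) ℚ)) + 1) = x₁ ^ (n + 1) - x₂ ^ (n + 1) := by
    rw [hcast, ← Polynomial.C_mul, mul_comm, ← Algebra.smul_def, smul_smul]
    push_cast
    rw [mul_inv_cancel₀ (by positivity), one_smul]
    simp
  simp only [timeSeries, PowerSeries.coeff_mk, Nat.succ_ne_zero, if_false, map_mul, map_add,
    map_natCast, map_one, RingHom.coe_coe, shift, aeval_X]
  rw [add_mul, hcoeff]
  by_cases hn : n = 0
  · subst hn
    simp
  · simp [hn, pow_succ']

lemma map_shift_mk_pS :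
    PowerSeries.map (shift : MvPolynomial ℕ ℚ →+* _) (PowerSeries.mk pS) =
      (1 - PowerSeries.C x₂ * PowerSeries.X) * expSeries * PowerSeries.mk fun n => x₁ ^ n := by
  refine eq_of_derivative_eq_mul
    (P := PowerSeries.map (shift : MvPolynomial ℕ ℚ →+* _) (PowerSeries.derivative _ timeSeries))
    ?_ ?_ ?_
  · rw [← map_mul, ← derivative_mk_pS]
    ext1 n
    simp [PowerSeries.coeff_derivative]
  · simp only [map_shift_derivative_timeSeries, Derivation.leibniz, map_sub,
      Derivation.map_one_eq_zero, PowerSeries.derivative_C, PowerSeries.derivative_X, smul_eq_mul,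
      derivative_expSeries, derivative_mk_pow]
    linear_combination PowerSeries.C x₂ * expSeries * (PowerSeries.mk fun n => x₁ ^ n) *
      mk_pow_mul x₂
  · simp [pS_zero, expSeries]

lemma map_shift_mk_pS_mul :
    PowerSeries.map (shift : MvPolynomial ℕ ℚ →+* _) (PowerSeries.mk pS) *
      (1 - PowerSeries.C x₁ * PowerSeries.X) =
      (1 - PowerSeries.C x₂ * PowerSeries.X) * expSeries := by
  rw [map_shift_mk_pS, mul_assoc, mk_pow_mul, mul_one]

lemma shift_pz_add_one (n : ℤ) :
    shift (pz (n + 1)) = (invFactorial (n + 1) • Polynomial.X ^ (n + 1).toNat -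
        invFactorial n • (x₂ * Polynomial.X ^ n.toNat)) + x₁ * shift (pz n) := by
  obtain h | h | h : n + 1 < 0 ∨ n = -1 ∨ 0 ≤ n := by omega
  · simp [pz, invFactorial, show ¬0 ≤ n + 1 by omega, show ¬0 ≤ n by omega]
  · subst h
    simp [pz, invFactorial, pS_zero]
  · lift n to ℕ using h
    have := congrArg (PowerSeries.coeff (n + 1)) map_shift_mk_pS_mul
    rw [mul_sub, mul_one, mul_left_comm, sub_mul, one_mul, mul_assoc, map_sub, map_sub,
      PowerSeries.coeff_C_mul, PowerSeries.coeff_C_mul, PowerSeries.coeff_succ_mul_X,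
      PowerSeries.coeff_succ_X_mul] at this
    simp only [PowerSeries.coeff_map, PowerSeries.coeff_mk, expSeries, RingHom.coe_coe,
      mul_smul_comm] at this
    have e : (n : ℤ) + 1 = ((n + 1 : ℕ) : ℤ) := by push_cast; rfl
    rw [e]
    simp only [pz, invFactorial, Int.natCast_nonneg, if_true, Int.toNat_natCast]
    linear_combination this

/-- The determinant `det (1 / (λ_{r+1} - 1 - r + j)!)` over the rows of `λ` below the first. -/
noncomputable def invFactorialDet {k : ℕ} (lam : Fin (k + 1) → ℕ) : ℚ :=
  Matrix.det (Matrix.of fun r j : Fin k =>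
    invFactorial ((lam r.succ : ℤ) - 1 - ((r : ℕ) : ℤ) + ((j : ℕ) : ℤ)))

lemma shift_schur {k : ℕ} (lam : Fin (k + 1) → ℕ) :
    shift (schur lam) = ∑ i : Fin (k + 1), (-1) ^ (i : ℕ) * shift (pz ((lam i : ℤ) - (i : ℕ))) *
      Matrix.det (Matrix.of fun r j : Fin k =>
        let n : ℤ := (lam (i.succAbove r) : ℤ) - ((i.succAbove r : ℕ) : ℤ) + ((j : ℕ) : ℤ)
        invFactorial (n + 1) • Polynomial.X ^ (n + 1).toNat -
          invFactorial n • (x₂ * Polynomial.X ^ n.toNat)) := by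
  have h := Matrix.det_eq_of_forall_col_eq_smul_add_pred (n := k)
    (A := Matrix.of fun a b : Fin (k + 1) =>
      shift (pz ((lam a : ℤ) - ((a : ℕ) : ℤ) + ((b : ℕ) : ℤ))))
    (B := Matrix.of fun a => Fin.cons (shift (pz ((lam a : ℤ) - ((a : ℕ) : ℤ)))) fun j : Fin k =>
        let n : ℤ := (lam a : ℤ) - ((a : ℕ) : ℤ) + ((j : ℕ) : ℤ)
        invFactorial (n + 1) • Polynomial.X ^ (n + 1).toNat -
          invFactorial n • (x₂ * Polynomial.X ^ n.toNat))
    (fun _ => x₁) (fun a => by simp) (fun a j => by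
      simp only [Matrix.of_apply, Fin.cons_succ, Fin.val_castSucc, Fin.val_succ]
      rw [← shift_pz_add_one]
      push_cast
      rw [add_assoc])
  rw [schur, AlgHom.map_det]
  refine Eq.trans (congrArg Matrix.det ?_) (h.trans ?_)
  · ext1 a b
    rfl
  · rw [Matrix.det_succ_column_zero]
    rfl

/-- Clearing the powers of `a` from the minors of `shift_schur`. -/
lemma pow_mul_det_eq {k : ℕ} (lam s : Fin k → ℕ) (hpos : ∀ r, 1 ≤ lam r) (hs : ∀ r, s r ≤ k) :
    Polynomial.X ^ (∑ j : Fin k, (k - (j : ℕ))) * Matrix.det (Matrix.of fun r j : Fin k =>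
        let n : ℤ := (lam r : ℤ) - (s r : ℤ) + ((j : ℕ) : ℤ)
        invFactorial (n + 1) • Polynomial.X ^ (n + 1).toNat -
          invFactorial n • (x₂ * Polynomial.X ^ n.toNat)) =
      Polynomial.X ^ (∑ r, (lam r + k - s r)) * Matrix.det (Matrix.of fun r j : Fin k =>
        let n : ℤ := (lam r : ℤ) - (s r : ℤ) + ((j : ℕ) : ℤ)
        (invFactorial (n + 1) • Polynomial.X - invFactorial n • x₂ :
          Polynomial (MvPolynomial (Fin 2) ℚ))) := by
  rw [← Finset.prod_pow_eq_pow_sum, ← Finset.prod_pow_eq_pow_sum, ← Matrix.det_mul_row,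
    ← Matrix.det_mul_column]
  congr 1
  ext1 r j
  simp only [Matrix.of_apply]
  set n : ℤ := (lam r : ℤ) - (s r : ℤ) + ((j : ℕ) : ℤ) with hn
  have hsr := hs r
  have hpr := hpos r
  have hj := j.2
  obtain h | h | h : n + 1 < 0 ∨ n = -1 ∨ 0 ≤ n := by omega
  · simp [invFactorial, show ¬0 ≤ n + 1 by omega, show ¬0 ≤ n by omega]
  · have e : lam r + k - s r = k - j - 1 := by omega
    have e' : k - (j : ℕ) = k - j - 1 + 1 := by omega
    rw [e, h, e']
    simp [invFactorial, pow_succ]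
  · have e : lam r + k - s r = k - j + n.toNat := by omega
    rw [e, show (n + 1).toNat = n.toNat + 1 by omega]
    simp only [mul_sub, mul_smul_comm]
    congr 2 <;> ring

lemma coeff_shift_schur {k : ℕ} (lam : Fin (k + 1) → ℕ) (hpos : ∀ i, 1 ≤ lam i)
    (hle : ∀ i, lam i ≤ lam 0) (N : ℕ) (hN : ∑ i : Fin k, lam i.succ = N + k) :
    (shift (schur lam)).coeff N =
      invFactorialDet lam • (toDiff (pz (lam 0)) * (-X 1) ^ k) := by
  set S := ∑ j : Fin k, (k - (j : ℕ)) with hS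
  have hW : ∑ r : Fin k, (lam r.succ + k - (r.succ : ℕ)) = N + S := by
    have h : ∑ r : Fin k, (lam r.succ + k - (r.succ : ℕ)) + k =
        ∑ r : Fin k, lam r.succ + S := by
      rw [hS, ← Finset.sum_add_distrib]
      refine Eq.trans (b := ∑ r : Fin k, (lam r.succ + k - (r.succ : ℕ) + 1))
        (by simp [Finset.sum_add_distrib]) ?_
      refine Finset.sum_congr rfl fun r _ => ?_
      have := r.2
      have := hpos r.succ
      simp only [Fin.val_succ]
      omega
    omega
  have hWi : ∀ i : Fin (k + 1), i ≠ 0 →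
      N + S < ∑ r : Fin k, (lam (i.succAbove r) + k - (i.succAbove r : ℕ)) := by
    intro i hi
    have h0 := Fin.sum_univ_succAbove (fun r : Fin (k + 1) => lam r + k - (r : ℕ)) 0
    have h1 := Fin.sum_univ_succAbove (fun r : Fin (k + 1) => lam r + k - (r : ℕ)) i
    simp only [Fin.zero_succAbove, hW] at h0
    have : (i : ℕ) ≠ 0 := fun h => hi (Fin.ext h)
    have := hle i
    have := hpos i
    have := i.2
    simp only [Fin.val_zero] at h0
    omega
  rw [← Polynomial.coeff_mul_X_pow _ S, mul_comm, shift_schur, Finset.mul_sum,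
    Polynomial.finsetSum_coeff]
  have hterm : ∀ i : Fin (k + 1), _ := fun i => pow_mul_det_eq (fun r => lam (i.succAbove r))
    (fun r => (i.succAbove r : ℕ)) (fun r => hpos _) (fun r => Nat.lt_succ_iff.1 (Fin.is_lt _))
  rw [Finset.sum_eq_single 0]
  · rw [mul_left_comm, hterm 0]
    simp only [Fin.zero_succAbove, hW]
    rw [mul_left_comm, Polynomial.coeff_X_pow_mul', if_pos le_rfl, Nat.sub_self,
      Polynomial.mul_coeff_zero, Fin.val_zero, pow_zero, one_mul, Nat.cast_zero, sub_zero,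
      ← toDiff_eq_coeff_shift, ← mul_smul_comm]
    congr 1
    rw [Polynomial.coeff_zero_eq_eval_zero, ← Polynomial.coe_evalRingHom, RingHom.map_det]
    have hmat : (Polynomial.evalRingHom (0 : MvPolynomial (Fin 2) ℚ)).mapMatrix
        (Matrix.of fun r j : Fin k =>
          (invFactorial ((lam r.succ : ℤ) - ((r.succ : ℕ) : ℤ) + ((j : ℕ) : ℤ) + 1) •
              Polynomial.X -
            invFactorial ((lam r.succ : ℤ) - ((r.succ : ℕ) : ℤ) + ((j : ℕ) : ℤ)) • x₂)) =
        (-X 1 : MvPolynomial (Fin 2) ℚ) • (algebraMap ℚ (MvPolynomial (Fin 2) ℚ)).mapMatrix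
          (Matrix.of fun r j : Fin k =>
            invFactorial ((lam r.succ : ℤ) - 1 - ((r : ℕ) : ℤ) + ((j : ℕ) : ℤ))) := by
      ext1 r j
      have e : (lam r.succ : ℤ) - ((r.succ : ℕ) : ℤ) + ((j : ℕ) : ℤ) =
          (lam r.succ : ℤ) - 1 - ((r : ℕ) : ℤ) + ((j : ℕ) : ℤ) := by
        push_cast [Fin.val_succ]
        ring
      simp only [RingHom.mapMatrix_apply, Matrix.map_apply, Matrix.of_apply, Matrix.smul_apply, e]
      simp [MvPolynomial.smul_eq_C_mul, mul_comm]
    refine (congrArg Matrix.det hmat).trans ?_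
    rw [Matrix.det_smul, Fintype.card_fin, ← RingHom.map_det, Algebra.smul_def, mul_comm,
      invFactorialDet]
  · intro i _ hi
    rw [mul_left_comm, hterm i, mul_left_comm, Polynomial.coeff_X_pow_mul',
      if_neg (by simpa using hWi i hi)]
  · simp

lemma toDiff_derivs_schur {k : ℕ} (lam : Fin (k + 1) → ℕ) (hpos : ∀ i, 1 ≤ lam i)
    (hle : ∀ i, lam i ≤ lam 0) (N : ℕ) (hN : ∑ i : Fin k, lam i.succ = N + k) :
    toDiff (derivs (List.replicate N 1) (schur lam)) =
      ((Nat.factorial N : ℚ) * invFactorialDet lam) • (toDiff (pz (lam 0)) * (-X 1) ^ k) := by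
  rw [toDiff_derivs_replicate, coeff_shift_schur lam hpos hle N hN, smul_smul]

lemma invFactorialDet_hook {k : ℕ} (lam : Fin (k + 1) → ℕ) (h : ∀ i : Fin k, lam i.succ = 1) :
    invFactorialDet lam = 1 := by
  rw [invFactorialDet, Matrix.det_of_isUpperTriangular]
  · simp [h, invFactorial]
  · intro r j hrj
    have : (j : ℕ) < r := hrj
    rw [Matrix.of_apply, h, invFactorial, if_neg (by push_cast; omega)]

lemma invFactorial_sub (u s : ℕ) :
    invFactorial ((u : ℤ) - s) = (Nat.factorial u : ℚ)⁻¹ * (descPochhammer ℚ s).eval (u : ℚ) := by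
  rw [descPochhammer_eval_eq_descFactorial]
  by_cases h : s ≤ u
  · have := Nat.factorial_mul_descFactorial h
    rw [← this, ← Nat.cast_sub h, invFactorial, if_pos (Int.natCast_nonneg _), Int.toNat_natCast]
    have h1 := Nat.factorial_ne_zero (u - s)
    have h2 : u.descFactorial s ≠ 0 := by
      rw [Ne, Nat.descFactorial_eq_zero_iff_lt]
      omega
    push_cast
    field_simp
  · rw [Nat.descFactorial_of_lt (by omega), invFactorial, if_neg (by omega)]
    simp

lemma prod_Ioi_eq_prod_range {k : ℕ} (f : ℕ → ℕ → ℚ) :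
    ∏ i : Fin k, ∏ j ∈ Finset.Ioi i, f i j =
      ∏ j ∈ Finset.range k, ∏ i ∈ Finset.range j, f i j := by
  rw [Finset.prod_sigma', Finset.prod_sigma']
  refine Finset.prod_bij (fun p _ => ⟨(p.2 : ℕ), (p.1 : ℕ)⟩) ?_ ?_ ?_ ?_
  · rintro ⟨i, j⟩ h
    simpa using h
  · rintro ⟨i, j⟩ _ ⟨i', j'⟩ _ h
    simp only [Sigma.mk.injEq, heq_eq_eq] at h
    exact Sigma.ext (Fin.ext h.2) (heq_of_eq (Fin.ext h.1))
  · rintro ⟨j, i⟩ h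
    simp only [Finset.mem_sigma, Finset.mem_range] at h
    exact ⟨⟨⟨i, by omega⟩, ⟨j, h.1⟩⟩, by simpa using h.2, rfl⟩
  · intros
    rfl

lemma invFactorialDet_eq {k : ℕ} (lam : Fin (k + 1) → ℕ) (hpos : ∀ i, 1 ≤ lam i) :
    invFactorialDet lam =
      (∏ i ∈ Finset.range k, (Nat.factorial (pad lam (k - i) + i - 1) : ℚ))⁻¹ *
        ∏ j ∈ Finset.range k, ∏ i ∈ Finset.range j,
          (((pad lam (k - j) + j : ℕ) : ℚ) - ((pad lam (k - i) + i : ℕ) : ℚ)) := by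
  set u : ℕ → ℕ := fun i => pad lam (k - i) + i - 1 with hu
  have hpad : ∀ i < k, ∃ h : k - i < k + 1, pad lam (k - i) = lam ⟨k - i, h⟩ := fun i _ =>
    ⟨by omega, dif_pos (by omega)⟩
  have hu1 : ∀ i < k, u i + 1 = pad lam (k - i) + i := by
    intro i hi
    obtain ⟨h, e⟩ := hpad i hi
    have := hpos ⟨k - i, h⟩
    simp only [hu]
    omega
  have hentry : ∀ r j : Fin k,
      invFactorial ((lam r.rev.succ : ℤ) - 1 - ((r.rev : ℕ) : ℤ) + ((j.rev : ℕ) : ℤ)) =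
      (Nat.factorial (u r) : ℚ)⁻¹ * (descPochhammer ℚ j).eval (u r : ℚ) := by
    intro r j
    rw [← invFactorial_sub]
    congr 1
    have h1 := hu1 r r.2
    obtain ⟨h, e⟩ := hpad r r.2
    have e2 : r.rev.succ = ⟨k - r, h⟩ := by
      ext
      simp only [Fin.val_succ, Fin.val_rev]
      omega
    rw [e2, ← e, Fin.val_rev, Fin.val_rev]
    omega
  rw [invFactorialDet, ← Matrix.det_submatrix_equiv_self Fin.revPerm]
  have hmat : (Matrix.of fun r j : Fin k => invFactorial
      ((lam r.succ : ℤ) - 1 - ((r : ℕ) : ℤ) + ((j : ℕ) : ℤ))).submatrix Fin.revPerm Fin.revPerm =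
      Matrix.of fun r j : Fin k => (Nat.factorial (u r) : ℚ)⁻¹ *
        (Matrix.of fun r j : Fin k => (descPochhammer ℚ j).eval (u r : ℚ)) r j := by
    ext1 r j
    exact hentry r j
  rw [hmat, Matrix.det_mul_column,
    ← Matrix.det_eval_matrixOfPolynomials_eq_det_vandermonde (fun r : Fin k => (u r : ℚ))
      (fun j => descPochhammer ℚ j) (fun j => descPochhammer_natDegree ℚ j)
      (fun j => monic_descPochhammer ℚ j), Matrix.det_vandermonde,
    prod_Ioi_eq_prod_range (fun i j => (u j : ℚ) - u i), Finset.prod_inv_distrib,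
    Fin.prod_univ_eq_prod_range (fun i => (Nat.factorial (u i) : ℚ))]
  congr 1
  refine Finset.prod_congr rfl fun j hj => Finset.prod_congr rfl fun i hi => ?_
  rw [Finset.mem_range] at hi hj
  rw [← hu1 j hj, ← hu1 i (hi.trans hj)]
  push_cast
  ring

end HookDerivative

/-- Let `λ` be a partition of length `l`,
`(w_l,...,w_1) = (λ_1,...,λ_l) + (l-1,...,1,0)` (so `w_{i+1} = pad lam (l-1-i) + i`,
0-indexed `i`) and `N'_{λ,1} = λ_2+⋯+λ_l - (l-1)`. Then `∂_1^{N'_{λ,1}} s_λ` at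
`t = [x_1]-[x_2]` equals `c_λ · s_{(λ_1,1^{l-1})}([x_1]-[x_2])`, where
`c_λ = (N'_{λ,1}! / Π_{i=1}^{l-1} (w_i - 1)!) · Π_{1≤i<j≤l-1} (w_j - w_i)`. -/
theorem statement14 (l : ℕ) (hl : 1 ≤ l) (lam : Fin l → ℕ)
    (hanti : Antitone lam) (hpos : ∀ i, 1 ≤ lam i)
    (N' : ℕ) (hN' : N' = (∑ a ∈ Finset.Ico 1 l, pad lam a) - (l - 1))
    (c : ℚ)
    (hc : c = (Nat.factorial N' : ℚ)
          / (∏ i ∈ Finset.range (l - 1), (Nat.factorial (pad lam (l - 1 - i) + i - 1) : ℚ))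
        * ∏ j ∈ Finset.range (l - 1), ∏ i ∈ Finset.range j,
            (((pad lam (l - 1 - j) + j : ℕ) : ℚ) - ((pad lam (l - 1 - i) + i : ℕ) : ℚ))) :
    toDiff (derivs (List.replicate N' 1) (schur lam))
      = c • toDiff (schur (fun a : Fin l => if (a : ℕ) = 0 then pad lam 0 else 1)) := by
  obtain ⟨k, rfl⟩ : ∃ k, l = k + 1 := ⟨l - 1, by omega⟩
  have hsum : ∑ a ∈ Finset.Ico 1 (k + 1), pad lam a = ∑ i : Fin k, lam i.succ := by
    rw [Finset.sum_Ico_eq_sum_range, Nat.add_sub_cancel,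
      ← Fin.sum_univ_eq_sum_range (fun i => pad lam (1 + i))]
    refine Finset.sum_congr rfl fun i _ => ?_
    rw [pad, dif_pos (by omega)]
    congr 1
    exact Fin.ext (by simp [add_comm])
  have hk : k ≤ ∑ i : Fin k, lam i.succ := by
    simpa using Finset.card_nsmul_le_sum Finset.univ (fun i : Fin k => lam i.succ) 1
      fun i _ => hpos _
  have hpad : pad lam 0 = lam 0 := dif_pos (Nat.succ_pos k)
  rw [HookDerivative.toDiff_derivs_schur lam hpos (fun i => hanti (Fin.zero_le i)) N' (by omega)]
  have hook := HookDerivative.toDiff_derivs_schur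
    (fun a : Fin (k + 1) => if (a : ℕ) = 0 then pad lam 0 else 1)
    (fun i => by split_ifs <;> simp [hpad, hpos])
    (fun i => by have := hpos 0; simp only [Fin.val_zero, if_true, hpad]; split_ifs <;> omega)
    0 (by simp)
  rw [HookDerivative.invFactorialDet_hook _ (by simp)] at hook
  simp only [List.replicate_zero, derivs, List.foldr_nil, Nat.factorial_zero, Nat.cast_one,
    mul_one, one_smul, Fin.val_zero, if_true, hpad] at hook
  simp only [hpad]
  rw [hook, HookDerivative.invFactorialDet_eq lam hpos, hc, Nat.add_sub_cancel, div_eq_mul_inv,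
    mul_assoc]
end
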